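/- For α > 2 and |δ| ≤ (1/(2α))·exp(1 - α/2), the function c(u,v) = 1 + δ·α²·(1-2u)(1-2v)·exp(α(u-u²+v-v²)) is nonnegative for all (u,v) ∈ [0,1]². -/

import Mathlib

/-!
In the coordinates `x = 1 - 2u`, `y = 1 - 2v` one has `u - u² + v - v² = 1/2 - (x² + y²)/4`, so the
term added to `1` is `δ α² e^{α/2}` times `x y e^{-α(x² + y²)/4}`. By AM-GM, `α |x y| / 2` is
at most `t = α(x² + y²)/4`, and the maximum `e⁻¹` of `t e^{-t}` turns into the bound on `δ`.
-/

open Real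

theorem mul_abs_mul_mul_exp_neg_sq_add_sq_le {a : ℝ} (ha : 0 ≤ a) (x y : ℝ) :
    a * |x * y| * exp (-(a * (x ^ 2 + y ^ 2) / 2)) ≤ exp (-1) := by
  have am_gm : 2 * |x * y| ≤ x ^ 2 + y ^ 2 := by
    simpa only [abs_mul, sq_abs, mul_assoc] using two_mul_le_add_sq |x| |y|
  calc a * |x * y| * exp (-(a * (x ^ 2 + y ^ 2) / 2))
      ≤ a * (x ^ 2 + y ^ 2) / 2 * exp (-(a * (x ^ 2 + y ^ 2) / 2)) := by
        gcongr
        linarith [mul_le_mul_of_nonneg_left am_gm ha]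
    _ ≤ exp (-1) := mul_exp_neg_le_exp_neg_one _

theorem sq_mul_abs_mul_exp_le {α : ℝ} (hα : 0 ≤ α) (u v : ℝ) :
    α ^ 2 * |(1 - 2 * u) * (1 - 2 * v)| * exp (α * (u - u ^ 2 + v - v ^ 2)) ≤
      2 * α * exp (α / 2 - 1) := by
  set x := 1 - 2 * u with hx
  set y := 1 - 2 * v with hy
  have exponent_eq :
      α * (u - u ^ 2 + v - v ^ 2) = α / 2 + -(α / 2 * (x ^ 2 + y ^ 2) / 2) := by
    rw [hx, hy]; ring
  calc α ^ 2 * |x * y| * exp (α * (u - u ^ 2 + v - v ^ 2))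
      = 2 * α * exp (α / 2) * (α / 2 * |x * y| * exp (-(α / 2 * (x ^ 2 + y ^ 2) / 2))) := by
        rw [exponent_eq, exp_add]; ring
    _ ≤ 2 * α * exp (α / 2) * exp (-1) := by
        gcongr
        exact mul_abs_mul_mul_exp_neg_sq_add_sq_le (by positivity) x y
    _ = 2 * α * exp (α / 2 - 1) := by
        rw [mul_assoc, ← exp_add, ← sub_eq_add_neg]

theorem abs_mul_sq_mul_exp_le_one {α δ : ℝ} (hα : 0 < α)
    (hδ : |δ| ≤ 1 / (2 * α) * exp (1 - α / 2)) (u v : ℝ) :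
    |δ * α ^ 2 * (1 - 2 * u) * (1 - 2 * v) * exp (α * (u - u ^ 2 + v - v ^ 2))| ≤ 1 := by
  calc |δ * α ^ 2 * (1 - 2 * u) * (1 - 2 * v) * exp (α * (u - u ^ 2 + v - v ^ 2))|
      = |δ| * (α ^ 2 * |(1 - 2 * u) * (1 - 2 * v)| * exp (α * (u - u ^ 2 + v - v ^ 2))) := by
        simp only [abs_mul, abs_pow, abs_exp, abs_of_pos hα]; ring
    _ ≤ 1 / (2 * α) * exp (1 - α / 2) * (2 * α * exp (α / 2 - 1)) :=
        mul_le_mul hδ (sq_mul_abs_mul_exp_le hα.le u v) (by positivity) (by positivity)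
    _ = exp (1 - α / 2) * exp (α / 2 - 1) := by field_simp
    _ = 1 := by rw [← exp_add, exp_eq_one_iff]; ring

theorem stmt_6_general {α δ : ℝ} (hα : 0 < α)
    (hδ : |δ| ≤ 1 / (2 * α) * exp (1 - α / 2)) (u v : ℝ) :
    0 ≤ 1 + δ * α ^ 2 * (1 - 2 * u) * (1 - 2 * v) * exp (α * (u - u ^ 2 + v - v ^ 2)) := by
  linarith [neg_le_of_abs_le (abs_mul_sq_mul_exp_le_one hα hδ u v)]

theorem stmt_6 (α δ : ℝ) (hα : α > 2) (hδ : |δ| ≤ (1/(2*α)) * Real.exp (1 - α/2)) :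
    ∀ u ∈ Set.Icc (0:ℝ) 1, ∀ v ∈ Set.Icc (0:ℝ) 1,
      1 + δ * α^2 * (1 - 2*u) * (1 - 2*v) * Real.exp (α * (u - u^2 + v - v^2)) ≥ 0 :=
  fun u _ v _ => stmt_6_general (two_pos.trans hα) hδ u v
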